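/- (Pre/post DID under staggered adoption.) Suppose Assumption DID holds for each path d in {(1,1),(0,1)} relative to d' = (0,0), that D1 ≤ D2 a.s. (staggered adoption, so P(D = (1,0)) = 0), that P(D = (1,1)) > 0 and P(D = (0,1)) > 0, that 0 < P(D2 = 1 | X) < 1 a.s. and 0 < P(D2 = 1) < 1, and that all displayed expectations are finite. Then E[D2]^{-1} · E[D2 · (E[ΔY | D2 = 1, X] − E[ΔY | D2 = 0, X])] = τ_{(1,1)(0,0)} · P(D1 = 1 | D2 = 1) + τ_{(0,1)(0,0)} · P(D1 = 0 | D2 = 1). -/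

import Mathlib

open MeasureTheory Set
open scoped Classical

noncomputable section

namespace DIDMissing

variable {Ω : Type*} {𝓧 : Type*}

/-- Real-valued indicator of a set. -/
def ind (A : Set Ω) : Ω → ℝ := A.indicator fun _ => (1 : ℝ)

/-- All treatment paths `{0,1}²` (coded as reals). -/
def allPaths : Set (ℝ × ℝ) := {(0, 0), (0, 1), (1, 0), (1, 1)}

/-- The three treated paths `{(1,1), (0,1), (1,0)}`. -/
def threePaths : Set (ℝ × ℝ) := {(1, 1), (0, 1), (1, 0)}

/-- The event `{D = d}` for a treatment path `d = (d₁, d₂)`. -/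
def evD (D1 D2 : Ω → ℝ) (d : ℝ × ℝ) : Set Ω := {ω | D1 ω = d.1 ∧ D2 ω = d.2}

/-- The event `{D₂ = b}`. -/
def evD2 (D2 : Ω → ℝ) (b : ℝ) : Set Ω := {ω | D2 ω = b}

/-- `g` is a (measurable-in-the-covariate) version of the conditional mean `E[Z ∣ A, X]`:
for every bounded measurable `h`, `E[1_A · Z · h(X)] = E[1_A · g(X) · h(X)]`. -/
def IsCondMeanGiven [MeasurableSpace Ω] [MeasurableSpace 𝓧] (P : Measure Ω) (X : Ω → 𝓧)
    (A : Set Ω) (Z : Ω → ℝ) (g : 𝓧 → ℝ) : Prop :=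
  Measurable g ∧
    ∀ h : 𝓧 → ℝ, Measurable h → (∃ C, ∀ x, |h x| ≤ C) →
      ∫ ω, ind A ω * Z ω * h (X ω) ∂P = ∫ ω, ind A ω * g (X ω) * h (X ω) ∂P

/-- Assumption DID for a path `d` relative to `d' = (0,0)`:
(i) no anticipation, `E[Y₀(d) ∣ D = d, X] = E[Y₀(0,0) ∣ D = d, X]` a.s., stated in the
version-free integral form; and (ii) conditional parallel trends, stated as the existence
of a common version of `E[Y₂(0,0) − Y₀(0,0) ∣ X]` and `E[Y₂(0,0) − Y₀(0,0) ∣ D = d, X]`. -/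
def DID [MeasurableSpace Ω] [MeasurableSpace 𝓧] (P : Measure Ω) (X : Ω → 𝓧)
    (D1 D2 : Ω → ℝ) (Y0p Y2p : ℝ × ℝ → Ω → ℝ) (d : ℝ × ℝ) : Prop :=
  (∀ h : 𝓧 → ℝ, Measurable h → (∃ C, ∀ x, |h x| ≤ C) →
      ∫ ω, ind (evD D1 D2 d) ω * Y0p d ω * h (X ω) ∂P
        = ∫ ω, ind (evD D1 D2 d) ω * Y0p (0, 0) ω * h (X ω) ∂P) ∧
  (∃ tr : 𝓧 → ℝ,
      IsCondMeanGiven P X Set.univ (fun ω => Y2p (0, 0) ω - Y0p (0, 0) ω) tr ∧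
      IsCondMeanGiven P X (evD D1 D2 d) (fun ω => Y2p (0, 0) ω - Y0p (0, 0) ω) tr)

/-- Assumption MAR: `S ⟂ (D₁, ΔY) ∣ (D₂, X)`, where `q d₂` is a version of the
missing-data probability `P(S = 1 ∣ D₂ = d₂, X)`, which is `(0,1]`-valued a.s. -/
def MAR [MeasurableSpace Ω] [MeasurableSpace 𝓧] (P : Measure Ω) (X : Ω → 𝓧)
    (D1 D2 S Y0 Y2 : Ω → ℝ) (q : ℝ → 𝓧 → ℝ) : Prop :=
  (∀ d2 ∈ ({0, 1} : Set ℝ), IsCondMeanGiven P X (evD2 D2 d2) S (q d2)) ∧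
  (∀ d2 ∈ ({0, 1} : Set ℝ), ∀ᵐ ω ∂P, 0 < q d2 (X ω) ∧ q d2 (X ω) ≤ 1) ∧
  (∀ d2 ∈ ({0, 1} : Set ℝ), ∀ f : ℝ × ℝ → ℝ, Measurable f → (∃ C, ∀ p, |f p| ≤ C) →
      ∀ h : 𝓧 → ℝ, Measurable h → (∃ C, ∀ x, |h x| ≤ C) →
        ∫ ω, ind (evD2 D2 d2) ω * S ω * f (D1 ω, Y2 ω - Y0 ω) * h (X ω) ∂P
          = ∫ ω, ind (evD2 D2 d2) ω * q d2 (X ω) * f (D1 ω, Y2 ω - Y0 ω) * h (X ω) ∂P)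

/-- The path-dependent ATT `τ_{d,(0,0)} = E[Y₂(d) − Y₂(0,0) ∣ D = d]`. -/
def tau [MeasurableSpace Ω] (P : Measure Ω) (D1 D2 : Ω → ℝ)
    (Y2p : ℝ × ℝ → Ω → ℝ) (d : ℝ × ℝ) : ℝ :=
  (P (evD D1 D2 d)).toReal⁻¹ * ∫ ω in evD D1 D2 d, (Y2p d ω - Y2p (0, 0) ω) ∂P

lemma aux_ind_meas [MeasurableSpace Ω] {A : Set Ω} (hA : MeasurableSet A) :
    Measurable (ind A) := measurable_const.indicator hA

lemma aux_sub [MeasurableSpace Ω] {P : Measure Ω} {f g : Ω → ℝ} (hf : Integrable f P)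
    (hg : Integrable g P) : Integrable (fun ω => f ω - g ω) P := hf.sub hg

lemma aux_add [MeasurableSpace Ω] {P : Measure Ω} {f g : Ω → ℝ} (hf : Integrable f P)
    (hg : Integrable g P) : Integrable (fun ω => f ω + g ω) P := hf.add hg

lemma aux_ind_abs (A : Set Ω) (ω : Ω) : |ind A ω| ≤ 1 := by
  unfold ind Set.indicator
  split_ifs <;> simp

lemma aux_ind_nonneg (A : Set Ω) (ω : Ω) : 0 ≤ ind A ω := by
  unfold ind Set.indicator
  split_ifs <;> simp

lemma aux_ind_int [MeasurableSpace Ω] {P : Measure Ω} {A : Set Ω} (hA : MeasurableSet A)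
    {Z : Ω → ℝ} (hZ : Integrable Z P) : Integrable (fun ω => ind A ω * Z ω) P := by
  refine hZ.bdd_mul (c := 1) (aux_ind_meas hA).aestronglyMeasurable ?_
  exact Filter.Eventually.of_forall fun ω => by simpa using aux_ind_abs A ω

lemma aux_h_int [MeasurableSpace Ω] [MeasurableSpace 𝓧] {P : Measure Ω} {X : Ω → 𝓧}
    (hX : Measurable X) {h : 𝓧 → ℝ} (hm : Measurable h) (hb : ∃ C, ∀ x, |h x| ≤ C)
    {Z : Ω → ℝ} (hZ : Integrable Z P) : Integrable (fun ω => Z ω * h (X ω)) P := by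
  obtain ⟨C, hC⟩ := hb
  refine hZ.mul_bdd (c := C) (hm.comp hX).aestronglyMeasurable ?_
  exact Filter.Eventually.of_forall fun ω => by simpa using hC (X ω)

lemma aux_sgn_abs (y : ℝ) : |(SignType.sign y : ℝ)| ≤ 1 := by
  rcases lt_trichotomy y 0 with h | h | h <;> simp [h]

lemma aux_sgn_meas : Measurable (fun y : ℝ => (SignType.sign y : ℝ)) := by
  have : (fun y : ℝ => (SignType.sign y : ℝ))
      = fun y => (if 0 < y then (1:ℝ) else if y < 0 then -1 else 0) := by
    funext y
    rcases lt_trichotomy y 0 with h | h | h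
    · simp [h, h.le]
    · simp [h]
    · simp [h]
  rw [this]
  exact Measurable.ite measurableSet_Ioi measurable_const
    (Measurable.ite measurableSet_Iio measurable_const measurable_const)

lemma aux_int [MeasurableSpace Ω] [MeasurableSpace 𝓧] {P : Measure Ω} [IsProbabilityMeasure P]
    {X : Ω → 𝓧} (hX : Measurable X) {A : Set Ω} (hA : MeasurableSet A) {Z : Ω → ℝ}
    (hZ : Integrable Z P) {g : 𝓧 → ℝ} (hg : IsCondMeanGiven P X A Z g) :
    Integrable (fun ω => ind A ω * g (X ω)) P := by
  obtain ⟨hgm, hgh⟩ := hg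
  have hφm : ∀ n : ℕ, MeasurableSet {ω | |g (X ω)| ≤ n} := fun n =>
    measurableSet_le (hgm.comp hX).abs measurable_const
  have hcov : AECover P Filter.atTop (fun n : ℕ => {ω | |g (X ω)| ≤ n}) := by
    refine ⟨Filter.Eventually.of_forall fun ω => ?_, hφm⟩
    obtain ⟨N, hN⟩ := exists_nat_ge |g (X ω)|
    filter_upwards [Filter.eventually_ge_atTop N] with n hn
    exact hN.trans (by exact_mod_cast hn)
  refine hcov.integrable_of_integral_norm_bounded (∫ ω, |Z ω| ∂P) ?_ ?_
  · intro n
    refine Measure.integrableOn_of_bounded (M := n) (measure_ne_top _ _)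
      ((aux_ind_meas hA).mul (hgm.comp hX)).aestronglyMeasurable ?_
    refine (ae_restrict_iff' (hφm n)).2 (Filter.Eventually.of_forall fun ω hω => ?_)
    rw [norm_mul, Real.norm_eq_abs, Real.norm_eq_abs]
    have h1 := aux_ind_abs A ω
    have h2 : |g (X ω)| ≤ n := hω
    nlinarith [abs_nonneg (g (X ω)), abs_nonneg (ind A ω)]
  · refine Filter.Eventually.of_forall fun n => ?_
    let h : 𝓧 → ℝ := {x | |g x| ≤ n}.indicator fun x => (SignType.sign (g x) : ℝ)
    have hm : Measurable h :=
      (aux_sgn_meas.comp hgm).indicator (measurableSet_le hgm.abs measurable_const)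
    have hb1 : ∀ x, |h x| ≤ 1 := by
      intro x
      simp only [h, Set.indicator]
      split_ifs
      · exact aux_sgn_abs _
      · simp
    have key := hgh h hm ⟨1, hb1⟩
    have e : ∫ ω in {ω | |g (X ω)| ≤ n}, ‖ind A ω * g (X ω)‖ ∂P
        = ∫ ω, ind A ω * g (X ω) * h (X ω) ∂P := by
      rw [← integral_indicator (hφm n)]
      congr 1
      funext ω
      simp only [h, Set.indicator, Set.mem_ofPred_eq]
      split_ifs
      · rw [norm_mul, Real.norm_eq_abs, Real.norm_eq_abs, abs_of_nonneg (aux_ind_nonneg A ω),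
          mul_assoc, mul_comm (g (X ω)), sign_mul_self]
      · simp
    rw [e, ← key]
    refine integral_mono (aux_h_int hX hm ⟨1, hb1⟩ (aux_ind_int hA hZ)) hZ.abs fun ω => ?_
    refine (le_abs_self _).trans ?_
    simp only [abs_mul]
    have h1 := aux_ind_abs A ω
    have h2 := hb1 (X ω)
    calc |ind A ω| * |Z ω| * |h (X ω)| ≤ 1 * |Z ω| * 1 := by gcongr
      _ = |Z ω| := by ring

lemma aux_zero [MeasurableSpace Ω] [MeasurableSpace 𝓧] {P : Measure Ω}
    {X : Ω → 𝓧} {A : Set Ω} {f : 𝓧 → ℝ} (hf : Measurable f)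
    (hi : Integrable (fun ω => ind A ω * f (X ω)) P)
    (h0 : ∀ h : 𝓧 → ℝ, Measurable h → (∃ C, ∀ x, |h x| ≤ C) →
      ∫ ω, ind A ω * f (X ω) * h (X ω) ∂P = 0) :
    ∀ᵐ ω ∂P, ind A ω * f (X ω) = 0 := by
  have key := h0 (fun x => (SignType.sign (f x) : ℝ)) (aux_sgn_meas.comp hf)
    ⟨1, fun x => aux_sgn_abs _⟩
  have e : (fun ω => ind A ω * f (X ω) * (SignType.sign (f (X ω)) : ℝ))
      = fun ω => |ind A ω * f (X ω)| := by
    funext ω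
    rw [abs_mul, abs_of_nonneg (aux_ind_nonneg A ω), mul_assoc, mul_comm (f (X ω)), sign_mul_self]
  rw [e, integral_eq_zero_iff_of_nonneg (fun _ => abs_nonneg _) hi.abs] at key
  filter_upwards [key] with ω hω
  simpa using hω

lemma aux_ae_eq [MeasurableSpace Ω] [MeasurableSpace 𝓧] {P : Measure Ω} {X : Ω → 𝓧}
    (hX : Measurable X) {A : Set Ω} {f g : 𝓧 → ℝ} (hf : Measurable f) (hg : Measurable g)
    (hfi : Integrable (fun ω => ind A ω * f (X ω)) P)
    (hgi : Integrable (fun ω => ind A ω * g (X ω)) P)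
    (h0 : ∀ h : 𝓧 → ℝ, Measurable h → (∃ C, ∀ x, |h x| ≤ C) →
      ∫ ω, ind A ω * f (X ω) * h (X ω) ∂P = ∫ ω, ind A ω * g (X ω) * h (X ω) ∂P) :
    ∀ᵐ ω ∂P, ind A ω * (f (X ω) - g (X ω)) = 0 := by
  refine aux_zero (f := fun x => f x - g x) (hf.sub hg) ?_ ?_
  · refine (hfi.sub hgi).congr (Filter.Eventually.of_forall fun ω => ?_)
    simp only [Pi.sub_apply]
    ring
  · intro h hm hb
    have e : (fun ω => ind A ω * (f (X ω) - g (X ω)) * h (X ω))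
      = fun ω => ind A ω * f (X ω) * h (X ω) - ind A ω * g (X ω) * h (X ω) := by
      funext ω; ring
    rw [e, integral_sub (aux_h_int hX hm hb hfi) (aux_h_int hX hm hb hgi), h0 h hm hb, sub_self]

/-- Pre/post DID under staggered adoption identifies a convex combination of the PDATTs
of early and late adoption. -/
theorem statement_19
    [MeasurableSpace Ω] [m𝓧 : MeasurableSpace 𝓧]
    (P : Measure Ω) [IsProbabilityMeasure P]
    (X : Ω → 𝓧) (hX : Measurable X)
    (Y0 Y2 D1 D2 : Ω → ℝ)
    (hY0 : Measurable Y0) (hY2 : Measurable Y2)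
    (hD1 : Measurable D1) (hD2 : Measurable D2)
    (hY0i : Integrable Y0 P) (hY2i : Integrable Y2 P)
    (hD1v : ∀ ω, D1 ω = 0 ∨ D1 ω = 1) (hD2v : ∀ ω, D2 ω = 0 ∨ D2 ω = 1)
    (Y0p Y2p : ℝ × ℝ → Ω → ℝ)
    (hY0p : ∀ e ∈ allPaths, Measurable (Y0p e) ∧ Integrable (Y0p e) P)
    (hY2p : ∀ e ∈ allPaths, Measurable (Y2p e) ∧ Integrable (Y2p e) P)
    (hcons0 : ∀ ω, Y0 ω = Y0p (D1 ω, D2 ω) ω)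
    (hcons2 : ∀ ω, Y2 ω = Y2p (D1 ω, D2 ω) ω)
    (hDID11 : DID P X D1 D2 Y0p Y2p (1, 1)) (hDID01 : DID P X D1 D2 Y0p Y2p (0, 1))
    (hstag : ∀ᵐ ω ∂P, D1 ω ≤ D2 ω)
    (hpos11 : 0 < P (evD D1 D2 (1, 1))) (hpos01 : 0 < P (evD D1 D2 (0, 1)))
    (pD2 : 𝓧 → ℝ)
    (hpD2 : IsCondMeanGiven P X Set.univ (ind (evD2 D2 1)) pD2)
    (hpD2v : ∀ᵐ ω ∂P, 0 < pD2 (X ω) ∧ pD2 (X ω) < 1)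
    (hD2pos : 0 < P (evD2 D2 1)) (hD2lt : P (evD2 D2 1) < 1)
    (m1 m0 : 𝓧 → ℝ)
    (hm1 : IsCondMeanGiven P X (evD2 D2 1) (fun ω => Y2 ω - Y0 ω) m1)
    (hm0 : IsCondMeanGiven P X (evD2 D2 0) (fun ω => Y2 ω - Y0 ω) m0)
    (hfin : Integrable (fun ω => D2 ω * (m1 (X ω) - m0 (X ω))) P) :
    (∫ ω, D2 ω ∂P)⁻¹ * ∫ ω, D2 ω * (m1 (X ω) - m0 (X ω)) ∂P
      = tau P D1 D2 Y2p (1, 1) * ((P (evD D1 D2 (1, 1))).toReal / (P (evD2 D2 1)).toReal)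
        + tau P D1 D2 Y2p (0, 1) * ((P (evD D1 D2 (0, 1))).toReal / (P (evD2 D2 1)).toReal) := by
  obtain ⟨na11, tr, htr, htr11⟩ := hDID11
  obtain ⟨na01, tr', htr', htr01'⟩ := hDID01
  have p00 : ((0:ℝ),(0:ℝ)) ∈ allPaths := by simp [allPaths]
  have p01 : ((0:ℝ),(1:ℝ)) ∈ allPaths := by simp [allPaths]
  have p11 : ((1:ℝ),(1:ℝ)) ∈ allPaths := by simp [allPaths]
  have i000 := (hY0p _ p00).2
  have i200 := (hY2p _ p00).2
  have i001 := (hY0p _ p01).2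
  have i201 := (hY2p _ p01).2
  have i011 := (hY0p _ p11).2
  have i211 := (hY2p _ p11).2
  have mev : ∀ d, MeasurableSet (evD D1 D2 d) := fun d =>
    (hD1 (measurableSet_singleton d.1)).inter (hD2 (measurableSet_singleton d.2))
  have mev2 : ∀ b, MeasurableSet (evD2 D2 b) := fun b => hD2 (measurableSet_singleton b)
  set T : Ω → ℝ := fun ω => Y2p (0, 0) ω - Y0p (0, 0) ω with hT
  have iT : Integrable T P := i200.sub i000
  have iΔ : Integrable (fun ω => Y2 ω - Y0 ω) P := hY2i.sub hY0i
  have u1 : ∀ ω, ind (Set.univ : Set Ω) ω = 1 := fun ω => by simp [ind]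
  have itr := aux_int hX MeasurableSet.univ iT htr
  have itr' := aux_int hX MeasurableSet.univ iT htr'
  have im1 := aux_int hX (mev2 1) iΔ hm1
  have im0 := aux_int hX (mev2 0) iΔ hm0
  have itrX : Integrable (fun ω => tr (X ω)) P := by simpa [u1] using itr
  -- the two versions agree
  have htt : ∀ᵐ ω ∂P, tr (X ω) = tr' (X ω) := by
    have := aux_ae_eq hX htr.1 htr'.1 itr itr'
      (fun h hm hb => (htr.2 h hm hb).symm.trans (htr'.2 h hm hb))
    filter_upwards [this] with ω hω
    rw [u1, one_mul] at hω
    linarith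
  have htr01 : ∀ h : 𝓧 → ℝ, Measurable h → (∃ C, ∀ x, |h x| ≤ C) →
      ∫ ω, ind (evD D1 D2 (0, 1)) ω * T ω * h (X ω) ∂P
        = ∫ ω, ind (evD D1 D2 (0, 1)) ω * tr (X ω) * h (X ω) ∂P := by
    intro h hm hb
    rw [htr01'.2 h hm hb]
    refine integral_congr_ae ?_
    filter_upwards [htt] with ω hω
    rw [hω]
  -- decomposition of indicators
  have hdec1 : ∀ ω, D2 ω = ind (evD D1 D2 (1, 1)) ω + ind (evD D1 D2 (0, 1)) ω := by
    intro ω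
    rcases hD1v ω with h1 | h1 <;> rcases hD2v ω with h2 | h2 <;>
      simp [ind, evD, Set.indicator, h1, h2]
  have hdecD : ∀ ω, ind (evD2 D2 1) ω = D2 ω := by
    intro ω
    rcases hD2v ω with h2 | h2 <;> simp [ind, evD2, Set.indicator, h2]
  have hdec0 : ∀ ω, ind (evD2 D2 0) ω = 1 - D2 ω := by
    intro ω
    rcases hD2v ω with h2 | h2 <;> simp [ind, evD2, Set.indicator, h2]
  have h0T : ∀ᵐ ω ∂P, ind (evD2 D2 0) ω * (Y2 ω - Y0 ω) = ind (evD2 D2 0) ω * T ω := by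
    filter_upwards [hstag] with ω hω
    rcases hD2v ω with h2 | h2
    · have h1 : D1 ω = 0 := by
        rcases hD1v ω with h1 | h1
        · exact h1
        · rw [h1, h2] at hω; norm_num at hω
      rw [hcons0, hcons2, h1, h2]
    · rw [hdec0, h2]; simp
  have hz : ∀ᵐ ω ∂P, ind (evD2 D2 0) ω * (m0 (X ω) - tr (X ω)) = 0 := by
    refine aux_ae_eq hX hm0.1 htr.1 im0 (aux_ind_int (mev2 0) itrX) ?_
    intro h hm hb
    rw [← hm0.2 h hm hb]
    have a1 : ∫ ω, ind (evD2 D2 0) ω * (Y2 ω - Y0 ω) * h (X ω) ∂P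
        = ∫ ω, ind (evD2 D2 0) ω * T ω * h (X ω) ∂P := by
      refine integral_congr_ae ?_
      filter_upwards [h0T] with ω hω
      rw [hω]
    have dec : ∀ W : Ω → ℝ, Integrable W P →
        ∫ ω, ind (evD2 D2 0) ω * W ω * h (X ω) ∂P
          = ∫ ω, ind Set.univ ω * W ω * h (X ω) ∂P
            - ∫ ω, ind (evD D1 D2 (1, 1)) ω * W ω * h (X ω) ∂P
            - ∫ ω, ind (evD D1 D2 (0, 1)) ω * W ω * h (X ω) ∂P := by
      intro W hW
      have b1 := aux_h_int hX hm hb (aux_ind_int MeasurableSet.univ hW)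
      have b2 := aux_h_int hX hm hb (aux_ind_int (mev (1, 1)) hW)
      have b3 := aux_h_int hX hm hb (aux_ind_int (mev (0, 1)) hW)
      rw [← integral_sub b1 b2, ← integral_sub (aux_sub b1 b2) b3]
      congr 1
      funext ω
      rw [hdec0, hdec1 ω, u1]
      ring
    rw [a1, dec T iT, dec (fun ω => tr (X ω)) itrX, htr.2 h hm hb, htr11.2 h hm hb,
      htr01 h hm hb]
  -- overlap
  have ipD : Integrable (fun ω => pD2 (X ω)) P := by
    have := aux_int hX MeasurableSet.univ
      (by simpa using aux_ind_int (mev2 1) (integrable_const (1:ℝ))) hpD2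
    simpa [u1] using this
  have iD2 : Integrable D2 P := by
    have := aux_ind_int (P := P) (mev2 1) (integrable_const (1:ℝ))
    simpa [hdecD] using this
  have hmt : ∀ᵐ ω ∂P, m0 (X ω) = tr (X ω) := by
    let h : 𝓧 → ℝ := {x | m0 x ≠ tr x}.indicator fun _ => (1:ℝ)
    have hm : Measurable h :=
      measurable_const.indicator (measurableSet_eq_fun hm0.1 htr.1).compl
    have hb : ∃ C, ∀ x, |h x| ≤ C := ⟨1, fun x => aux_ind_abs _ x⟩
    have k := hpD2.2 h hm hb
    simp only [u1, one_mul, hdecD] at k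
    have ih : Integrable (fun ω => h (X ω)) P := by
      simpa using aux_h_int hX hm hb (integrable_const (1:ℝ))
    have iph := aux_h_int hX hm hb ipD
    have iDh := aux_h_int hX hm hb iD2
    have z1 : ∫ ω, (h (X ω) - D2 ω * h (X ω)) ∂P = 0 := by
      refine integral_eq_zero_of_ae ?_
      filter_upwards [hz] with ω hω
      rw [hdec0] at hω
      simp only [h, Set.indicator, Set.mem_ofPred_eq, Pi.zero_apply]
      split_ifs with hne
      · rcases mul_eq_zero.1 hω with h' | h'
        · linarith
        · exact absurd (sub_eq_zero.1 h') hne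
      · simp
    have z2 : ∫ ω, (h (X ω) - pD2 (X ω) * h (X ω)) ∂P = 0 := by
      rw [integral_sub ih iph, ← k, ← integral_sub ih iDh, z1]
    have z3 := (integral_eq_zero_iff_of_nonneg_ae (by
      filter_upwards [hpD2v] with ω hω
      have : 0 ≤ h (X ω) := aux_ind_nonneg _ _
      simp only [Pi.zero_apply]
      nlinarith [hω.2]) (aux_sub ih iph)).1 z2
    filter_upwards [z3, hpD2v] with ω hω hp
    by_contra hne
    have : h (X ω) = 1 := by simp [h, hne]
    simp only [this, Pi.zero_apply] at hω
    linarith [hp.2]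
  -- numerator
  have one : ∃ C : ℝ, ∀ x : 𝓧, |(fun _ => (1:ℝ)) x| ≤ C := ⟨1, by simp⟩
  have km1 := hm1.2 (fun _ => 1) measurable_const one
  have kt11 := htr11.2 (fun _ => 1) measurable_const one
  have kt01 := htr01 (fun _ => 1) measurable_const one
  have kn11 := na11 (fun _ => 1) measurable_const one
  have kn01 := na01 (fun _ => 1) measurable_const one
  simp only [mul_one] at km1 kt11 kt01 kn11 kn01
  have seti : ∀ d, ∀ W : Ω → ℝ, ∫ ω in evD D1 D2 d, W ω ∂P = ∫ ω, ind (evD D1 D2 d) ω * W ω ∂P := by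
    intro d W
    rw [← integral_indicator (mev d)]
    congr 1
    funext ω
    simp only [ind, Set.indicator]
    split_ifs <;> simp
  have J := fun d (W : Ω → ℝ) (hW : Integrable W P) => aux_ind_int (P := P) (mev d) hW
  have num : ∫ ω, D2 ω * (m1 (X ω) - m0 (X ω)) ∂P
      = ∫ ω in evD D1 D2 (1, 1), (Y2p (1, 1) ω - Y2p (0, 0) ω) ∂P
        + ∫ ω in evD D1 D2 (0, 1), (Y2p (0, 1) ω - Y2p (0, 0) ω) ∂P := by
    have n1 : ∫ ω, D2 ω * (m1 (X ω) - m0 (X ω)) ∂P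
        = ∫ ω, (ind (evD2 D2 1) ω * m1 (X ω) - (ind (evD D1 D2 (1, 1)) ω * tr (X ω)
          + ind (evD D1 D2 (0, 1)) ω * tr (X ω))) ∂P := by
      refine integral_congr_ae ?_
      filter_upwards [hmt] with ω hω
      rw [hω, hdecD, hdec1 ω]
      ring
    have n2 : ∫ ω, ind (evD2 D2 1) ω * (Y2 ω - Y0 ω) ∂P
        = ∫ ω, ((ind (evD D1 D2 (1, 1)) ω * Y2p (1, 1) ω - ind (evD D1 D2 (1, 1)) ω * Y0p (1, 1) ω)
          + (ind (evD D1 D2 (0, 1)) ω * Y2p (0, 1) ω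
            - ind (evD D1 D2 (0, 1)) ω * Y0p (0, 1) ω)) ∂P := by
      congr 1
      funext ω
      rw [hcons0, hcons2]
      rcases hD1v ω with h1 | h1 <;> rcases hD2v ω with h2 | h2 <;>
        simp [ind, evD, evD2, Set.indicator, h1, h2]
    have sT : ∀ d, ∫ ω, ind (evD D1 D2 d) ω * T ω ∂P
        = ∫ ω, ind (evD D1 D2 d) ω * Y2p (0, 0) ω ∂P
          - ∫ ω, ind (evD D1 D2 d) ω * Y0p (0, 0) ω ∂P := by
      intro d
      rw [← integral_sub (J d _ i200) (J d _ i000)]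
      congr 1
      funext ω
      simp only [hT]
      ring
    have sY : ∀ d e, Integrable (Y2p e) P → ∫ ω, ind (evD D1 D2 d) ω * (Y2p e ω - Y2p (0, 0) ω) ∂P
        = ∫ ω, ind (evD D1 D2 d) ω * Y2p e ω ∂P
          - ∫ ω, ind (evD D1 D2 d) ω * Y2p (0, 0) ω ∂P := by
      intro d e he
      rw [← integral_sub (J d _ he) (J d _ i200)]
      congr 1
      funext ω
      ring
    rw [integral_add (aux_sub (J _ _ i211) (J _ _ i011)) (aux_sub (J _ _ i201) (J _ _ i001)),
      integral_sub (J _ _ i211) (J _ _ i011), integral_sub (J _ _ i201) (J _ _ i001)] at n2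
    rw [n1, integral_sub im1 (aux_add (J _ _ itrX) (J _ _ itrX)),
      integral_add (J _ _ itrX) (J _ _ itrX), ← km1, n2, ← kt11, ← kt01, sT, sT, seti, seti,
      sY _ _ i211, sY _ _ i201, kn11, kn01]
    ring
  have den : ∫ ω, D2 ω ∂P = (P (evD2 D2 1)).toReal := by
    have : D2 = (evD2 D2 1).indicator fun _ => (1:ℝ) := by
      funext ω
      exact (hdecD ω).symm
    calc ∫ ω, D2 ω ∂P = ∫ ω, (evD2 D2 1).indicator (fun _ => (1:ℝ)) ω ∂P :=
          integral_congr_ae (Filter.Eventually.of_forall fun ω => (hdecD ω).symm)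
      _ = (P (evD2 D2 1)).toReal := by
          rw [integral_indicator (mev2 1)]
          simp [Measure.real]
  have q11 : (P (evD D1 D2 (1, 1))).toReal ≠ 0 :=
    (ENNReal.toReal_pos hpos11.ne' (measure_ne_top _ _)).ne'
  have q01 : (P (evD D1 D2 (0, 1))).toReal ≠ 0 :=
    (ENNReal.toReal_pos hpos01.ne' (measure_ne_top _ _)).ne'
  have q2 : (P (evD2 D2 1)).toReal ≠ 0 :=
    (ENNReal.toReal_pos hD2pos.ne' (measure_ne_top _ _)).ne'
  rw [num, den]
  unfold tau
  field_simp

end DIDMissing
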